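/- Let G be an LWF chain graph with vertex set V and let T ∈ V. Then T is c-separated from V∖({T}∪Mb(T)) given Mb(T); that is, every route in G between T and any vertex A ∈ V∖({T}∪Mb(T)) is intercepted by Mb(T). -/

import Mathlib

/- Formalization of LWF chain graphs, routes, sections, c-separation,
   minimal complexes, Markov blankets, moral graphs, and ancestral sets. -/

namespace LWF

/-- An LWF chain graph: a mixed graph with directed edges `dir` and (symmetric)
undirected edges `undir`, no loops, no pair of vertices joined by more than one
edge, and no partially directed cycles. -/
structure ChainGraph (V : Type*) where
  dir : V → V → Prop
  undir : V → V → Prop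
  undir_symm : ∀ u v, undir u v → undir v u
  dir_irrefl : ∀ v, ¬ dir v v
  undir_irrefl : ∀ v, ¬ undir v v
  dir_asymm : ∀ u v, dir u v → ¬ dir v u
  dir_not_undir : ∀ u v, dir u v → ¬ undir u v
  /-- No partially directed cycle: there is no sequence `ρ 0, …, ρ n` (`n ≥ 2`)
  with `ρ n = ρ 0`, the vertices `ρ 0, …, ρ (n-1)` distinct, every consecutive
  pair joined by `dir` or `undir` (in the forward direction), and at least one
  forward directed edge on it. -/
  no_partially_directed_cycle :
    ∀ (n : ℕ) (ρ : ℕ → V), 2 ≤ n → ρ n = ρ 0 →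
      (∀ i j, i < j → j < n → ρ i ≠ ρ j) →
      (∀ i, i < n → dir (ρ i) (ρ (i+1)) ∨ undir (ρ i) (ρ (i+1))) →
      ¬ ∃ i, i < n ∧ dir (ρ i) (ρ (i+1))

namespace ChainGraph

variable {V : Type*}

/-- Two vertices are adjacent if they are joined by a directed or an undirected edge. -/
def Adj (G : ChainGraph V) (u v : V) : Prop := G.dir u v ∨ G.dir v u ∨ G.undir u v

/-- A partially directed path from `u` to `w`: a sequence of distinct vertices,
each consecutive pair joined by a forward directed or an undirected edge, with
at least one directed edge on it. -/
def PDPath (G : ChainGraph V) (u w : V) : Prop :=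
  ∃ (n : ℕ) (ρ : ℕ → V), 1 ≤ n ∧ ρ 0 = u ∧ ρ n = w ∧
    (∀ i j, i ≤ n → j ≤ n → i ≠ j → ρ i ≠ ρ j) ∧
    (∀ i, i < n → G.dir (ρ i) (ρ (i+1)) ∨ G.undir (ρ i) (ρ (i+1))) ∧
    (∃ i, i < n ∧ G.dir (ρ i) (ρ (i+1)))

/-- `an(Z)`: the set of vertices having a partially directed path to some vertex of `Z`. -/
def anc (G : ChainGraph V) (Z : Set V) : Set V := {x | ∃ z ∈ Z, G.PDPath x z}

/-- Parents of `v`. -/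
def pa (G : ChainGraph V) (v : V) : Set V := {u | G.dir u v}

/-- Children of `v`. -/
def ch (G : ChainGraph V) (v : V) : Set V := {u | G.dir v u}

/-- Neighbours of `v`. -/
def nb (G : ChainGraph V) (v : V) : Set V := {u | G.undir u v}

/-- A minimal complex `a → ρ 1 − ⋯ − ρ n ← b` (with `ρ 0 = a`, `ρ (n+1) = b`,
`n ≥ 1`): all vertices distinct, the indicated edges present, and it is an
induced subgraph, i.e. the only adjacencies among its vertices are between
consecutive ones (in particular `a` and `b` are non-adjacent). -/
def IsMinimalComplex (G : ChainGraph V) (a b : V) (n : ℕ) (ρ : ℕ → V) : Prop :=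
  1 ≤ n ∧ ρ 0 = a ∧ ρ (n+1) = b ∧
  (∀ i j, i ≤ n+1 → j ≤ n+1 → i ≠ j → ρ i ≠ ρ j) ∧
  G.dir a (ρ 1) ∧ G.dir b (ρ n) ∧
  (∀ i, 1 ≤ i → i < n → G.undir (ρ i) (ρ (i+1))) ∧
  (∀ i j, i ≤ n+1 → j ≤ n+1 → G.Adj (ρ i) (ρ j) → j = i+1 ∨ i = j+1)

/-- Complex-spouses of `a`. -/
def csp (G : ChainGraph V) (a : V) : Set V := {b | ∃ n ρ, G.IsMinimalComplex a b n ρ}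

/-- The Markov blanket of `T`: parents, neighbours, children and complex-spouses of `T`. -/
def mb (G : ChainGraph V) (T : V) : Set V := G.pa T ∪ G.nb T ∪ G.ch T ∪ G.csp T

/-- A route in `G`: a sequence of `len + 1` vertices `vtx 0, …, vtx len`
(hence nonempty), each consecutive pair joined by an edge of `G`. -/
structure Route (G : ChainGraph V) where
  len : ℕ
  vtx : ℕ → V
  link : ∀ i, i < len → G.Adj (vtx i) (vtx (i+1))

/-- The positions `a, …, b` of the route form a section: all steps inside are
undirected edges, and the run is maximal on both sides. -/
def Route.IsSection {G : ChainGraph V} (ω : Route G) (a b : ℕ) : Prop :=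
  a ≤ b ∧ b ≤ ω.len ∧
  (∀ k, a ≤ k → k < b → G.undir (ω.vtx k) (ω.vtx (k+1))) ∧
  (0 < a → ¬ G.undir (ω.vtx (a-1)) (ω.vtx a)) ∧
  (b < ω.len → ¬ G.undir (ω.vtx b) (ω.vtx (b+1)))

/-- A collider section: a section which the route enters by an arrowhead at both
ends, i.e. `vtx (a-1) → vtx a − ⋯ − vtx b ← vtx (b+1)` occurs on the route. -/
def Route.IsColliderSection {G : ChainGraph V} (ω : Route G) (a b : ℕ) : Prop :=
  ω.IsSection a b ∧ 0 < a ∧ b < ω.len ∧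
  G.dir (ω.vtx (a-1)) (ω.vtx a) ∧ G.dir (ω.vtx (b+1)) (ω.vtx b)

/-- A route is active with respect to `Z` if every collider section of it
contains a vertex of `Z ∪ an(Z)` and no vertex of any non-collider section is in `Z`. -/
def Route.Active {G : ChainGraph V} (ω : Route G) (Z : Set V) : Prop :=
  (∀ a b, ω.IsColliderSection a b → ∃ k, a ≤ k ∧ k ≤ b ∧ ω.vtx k ∈ Z ∪ G.anc Z) ∧
  (∀ a b, ω.IsSection a b → ¬ ω.IsColliderSection a b →
    ∀ k, a ≤ k → k ≤ b → ω.vtx k ∉ Z)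

/-- A route is intercepted (blocked) by `Z` if it is not active with respect to `Z`. -/
def Route.Intercepted {G : ChainGraph V} (ω : Route G) (Z : Set V) : Prop :=
  ¬ ω.Active Z

/-- `X` and `Y` are c-separated given `Z`: every route between a vertex of `X`
and a vertex of `Y` is intercepted by `Z`. -/
def CSep (G : ChainGraph V) (X Y Z : Set V) : Prop :=
  ∀ ω : Route G,
    ((ω.vtx 0 ∈ X ∧ ω.vtx ω.len ∈ Y) ∨ (ω.vtx 0 ∈ Y ∧ ω.vtx ω.len ∈ X)) →
    ω.Intercepted Z

/-- Moral graph adjacency: distinct `u`, `v` are adjacent in `G^m` iff they are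
adjacent in `G` or are complex-spouses. -/
def MoralAdj (G : ChainGraph V) (u v : V) : Prop :=
  u ≠ v ∧ (G.dir u v ∨ G.dir v u ∨ G.undir u v ∨ u ∈ G.csp v ∨ v ∈ G.csp u)

/-- A set `A` is ancestral if it contains the boundary (parents and neighbours)
of each of its elements. -/
def Ancestral (G : ChainGraph V) (A : Set V) : Prop :=
  ∀ a ∈ A, ∀ u, (G.dir u a ∨ G.undir u a) → u ∈ A

/-- `An(A)`: the smallest ancestral set containing `A`. -/
def An (G : ChainGraph V) (A : Set V) : Set V :=
  ⋂₀ {B : Set V | A ⊆ B ∧ G.Ancestral B}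

/-- A minimal complex of the induced subgraph `G_A`: a minimal complex of `G`
all of whose vertices lie in `A`. -/
def IsMinimalComplexIn (G : ChainGraph V) (A : Set V) (a b : V) (n : ℕ) (ρ : ℕ → V) : Prop :=
  G.IsMinimalComplex a b n ρ ∧ ∀ i, i ≤ n+1 → ρ i ∈ A

/-- Adjacency in the moral graph `(G_A)^m` of the induced subgraph of `G` on `A`:
distinct `u, v ∈ A` joined by an edge of `G`, or complex-spouses in `G_A`. -/
def MoralAdjIn (G : ChainGraph V) (A : Set V) (u v : V) : Prop :=
  u ∈ A ∧ v ∈ A ∧ u ≠ v ∧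
    (G.dir u v ∨ G.dir v u ∨ G.undir u v ∨
      (∃ n ρ, G.IsMinimalComplexIn A u v n ρ) ∨ (∃ n ρ, G.IsMinimalComplexIn A v u n ρ))

end ChainGraph

/-- A path from `u` to `v` in an undirected graph with adjacency relation `R`:
a sequence of `n + 1 ≥ 2` distinct vertices `ρ 0 = u, …, ρ n = v` with each
consecutive pair adjacent. -/
def UPath {V : Type*} (R : V → V → Prop) (u v : V) (n : ℕ) (ρ : ℕ → V) : Prop :=
  1 ≤ n ∧ ρ 0 = u ∧ ρ n = v ∧
  (∀ i j, i ≤ n → j ≤ n → i ≠ j → ρ i ≠ ρ j) ∧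
  (∀ i, i < n → R (ρ i) (ρ (i+1)))

end LWF

/-!
Follow an active route that starts at `T` through its returns to `T` that are entered through the
tail of an arrow. At such a return `i` the next vertex `v` lies in `Mb(T)`, so it has to lie in a
collider section. This excludes `T ← v` and `T − v`, because the section of `v` is then entered
through a tail. Hence `T → v − ⋯ − y ← e`, and `e`, which again starts a non-collider section, is
not in `Mb(T)`. As `T` and `e` are parents of the same chain component, `e` would be adjacent to
`T` or a complex-spouse of `T` unless `e = T`: the position of `e` is a later return of the same
kind. So the route can only end at `T`.
-/

namespace LWF

/-- A path `ρ 0, …, ρ n` along a relation `R` without shortcuts: its vertices are distinct and `R`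
relates no vertex to a later one except its successor. Values of `ρ` beyond `n` are irrelevant. -/
structure IsChordlessPath {V : Type*} (R : V → V → Prop) (n : ℕ) (ρ : ℕ → V) : Prop where
  step : ∀ i < n, R (ρ i) (ρ (i + 1))
  eq_succ_of_rel : ∀ i j, i < j → j ≤ n → R (ρ i) (ρ j) → j = i + 1
  ne : ∀ i j, i < j → j ≤ n → ρ i ≠ ρ j

namespace IsChordlessPath

variable {V : Type*} {R : V → V → Prop} {n m : ℕ} {ρ : ℕ → V}

lemma take (h : IsChordlessPath R n ρ) (hm : m ≤ n) : IsChordlessPath R m ρ where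
  step i hi := h.step i (hi.trans_le hm)
  eq_succ_of_rel i j hij hj := h.eq_succ_of_rel i j hij (hj.trans hm)
  ne i j hij hj := h.ne i j hij (hj.trans hm)

lemma snoc {c : V} (h : IsChordlessPath R n ρ) (hc : R (ρ n) c) (hfirst : ∀ i < n, ¬ R (ρ i) c)
    (hnew : ∀ i ≤ n, ρ i ≠ c) : IsChordlessPath R (n + 1) (Function.update ρ (n + 1) c) := by
  have hold : ∀ i ≤ n, Function.update ρ (n + 1) c i = ρ i := fun i hi =>
    Function.update_of_ne (by omega) _ _
  have hlast : Function.update ρ (n + 1) c (n + 1) = c := Function.update_self ..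
  refine ⟨fun i hi => ?_, fun i j hij hj => ?_, fun i j hij hj => ?_⟩
  · rw [hold i (by omega)]
    obtain rfl | hin := (Nat.le_of_lt_succ hi).eq_or_lt
    · rwa [hlast]
    · rw [hold _ hin]
      exact h.step i hin
  · rw [hold i (by omega)]
    obtain rfl | hjn := hj.eq_or_lt
    · rw [hlast]
      intro hic
      by_contra hne
      exact hfirst i (by omega) hic
    · rw [hold j (by omega)]
      exact h.eq_succ_of_rel i j hij (by omega)
  · rw [hold i (by omega)]
    obtain rfl | hjn := hj.eq_or_lt
    · rw [hlast]
      exact hnew i (by omega)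
    · rw [hold j (by omega)]
      exact h.ne i j hij (by omega)

end IsChordlessPath

lemma exists_isChordlessPath {V : Type*} {R : V → V → Prop} {u v : V}
    (h : Relation.ReflTransGen R u v) :
    ∃ n ρ, ρ 0 = u ∧ ρ n = v ∧ IsChordlessPath R n ρ := by
  classical
  induction h with
  | refl => exact ⟨0, fun _ => u, rfl, rfl, by simp, by omega, by omega⟩
  | @tail b c _ hbc ih =>
    obtain ⟨n, ρ, h0, rfl, hρ⟩ := ih
    by_cases hc : ∃ i ≤ n, ρ i = c
    · obtain ⟨i, hi, rfl⟩ := hc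
      exact ⟨i, ρ, h0, rfl, hρ.take hi⟩
    · push Not at hc
      -- Branching off to `c` at the earliest possible vertex creates no chord.
      have hex : ∃ i, R (ρ i) c := ⟨n, hbc⟩
      have hle : Nat.find hex ≤ n := Nat.find_min' hex hbc
      exact ⟨_, _, by simpa using h0, Function.update_self ..,
        (hρ.take hle).snoc (Nat.find_spec hex) (fun i => Nat.find_min hex)
          fun i hi => hc i (hi.trans hle)⟩

namespace ChainGraph

variable {V : Type*} {G : ChainGraph V}

lemma Adj.symm {u v : V} (h : G.Adj u v) : G.Adj v u := by
  obtain h | h | h := h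
  exacts [.inr (.inl h), .inl h, .inr (.inr (G.undir_symm _ _ h))]

lemma not_adj_self (v : V) : ¬ G.Adj v v := by
  rintro (h | h | h)
  exacts [G.dir_irrefl v h, G.dir_irrefl v h, G.undir_irrefl v h]

/-- One step of a partially directed path: along an arrow or an undirected edge. -/
def Forward (G : ChainGraph V) (u v : V) : Prop := G.dir u v ∨ G.undir u v

lemma not_reflTransGen_forward_of_dir {u v : V} (huv : G.dir u v) :
    ¬ Relation.ReflTransGen G.Forward v u := by
  intro hvu
  obtain ⟨n, ρ, rfl, rfl, hρ⟩ := exists_isChordlessPath hvu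
  have hn : n ≠ 0 := by
    rintro rfl
    exact G.dir_irrefl _ huv
  -- The arrow closes the path to the cycle `ρ n → ρ 0, …, ρ n`.
  let σ : ℕ → V := fun k => k.casesOn (ρ n) ρ
  refine G.no_partially_directed_cycle (n + 1) σ (by omega) rfl ?_ ?_ ⟨0, by omega, huv⟩
  · rintro (_ | i) (_ | j) hij hj
    · omega
    · exact (hρ.ne j n (by omega) le_rfl).symm
    · omega
    · exact hρ.ne i j (by omega) (by omega)
  · rintro (_ | i) hi
    · exact .inl huv
    · exact hρ.step i (by omega)

/-- `x` and `y` lie in the same chain component, i.e. in the same connected component of the graph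
left after deleting all arrows. -/
def ChainConnected (G : ChainGraph V) (x y : V) : Prop := Relation.ReflTransGen G.undir x y

namespace ChainConnected

variable {a x y z : V}

lemma symm (h : G.ChainConnected x y) : G.ChainConnected y x :=
  have : Std.Symm G.undir := ⟨G.undir_symm⟩
  Relation.ReflTransGen.stdSymm.symm _ _ h

lemma trans (hxy : G.ChainConnected x y) (hyz : G.ChainConnected y z) : G.ChainConnected x z :=
  Relation.ReflTransGen.trans hxy hyz

lemma reflTransGen_forward (h : G.ChainConnected x y) : Relation.ReflTransGen G.Forward x y :=
  Relation.ReflTransGen.mono (fun _ _ => Or.inr) _ _ h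

lemma not_dir (h : G.ChainConnected x y) : ¬ G.dir x y := fun hxy =>
  not_reflTransGen_forward_of_dir hxy h.symm.reflTransGen_forward

lemma undir_of_adj (h : G.ChainConnected x y) (hadj : G.Adj x y) : G.undir x y := by
  obtain hxy | hyx | hxy := hadj
  exacts [(h.not_dir hxy).elim, (h.symm.not_dir hyx).elim, hxy]

lemma dir_of_adj (h : G.ChainConnected x z) (hax : G.dir a x) (hadj : G.Adj a z) :
    G.dir a z := by
  have hza : ¬ G.Forward z a := fun hza =>
    not_reflTransGen_forward_of_dir hax (h.reflTransGen_forward.tail hza)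
  obtain haz | hza' | haz := hadj
  exacts [haz, (hza (.inl hza')).elim, (hza (.inr (G.undir_symm _ _ haz))).elim]

end ChainConnected

section MarkovBlanket

variable {T e x y : V}

/-- Adjacency in the subgraph of `G` induced by `W`. -/
def AdjIn (G : ChainGraph V) (W : Set V) (u v : V) : Prop := G.Adj u v ∧ u ∈ W ∧ v ∈ W

lemma reflTransGen_adjIn_of_common_component (hTx : G.dir T x) (hxy : G.ChainConnected x y)
    (hey : G.dir e y) :
    Relation.ReflTransGen (G.AdjIn ({T, e} ∪ {z | G.ChainConnected x z})) T e := by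
  have hTy : Relation.ReflTransGen (G.AdjIn ({T, e} ∪ {z | G.ChainConnected x z})) T y := by
    clear hey
    induction hxy with
    | refl => exact .single ⟨.inl hTx, by simp, .inr .refl⟩
    | tail hxb hbc ih =>
      exact ih.tail ⟨.inr (.inr hbc), .inr hxb, .inr (hxb.tail hbc)⟩
  exact hTy.tail ⟨.inr (.inl hey), .inr hxy, by simp⟩

lemma mem_csp_of_common_component (hne : T ≠ e) (hna : ¬ G.Adj T e) (hTx : G.dir T x)
    (hxy : G.ChainConnected x y) (hey : G.dir e y) : e ∈ G.csp T := by
  obtain ⟨n, ρ, rfl, rfl, hρ⟩ :=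
    exists_isChordlessPath (reflTransGen_adjIn_of_common_component hTx hxy hey)
  obtain ⟨m, rfl⟩ : ∃ m, n = m + 1 := Nat.exists_eq_succ_of_ne_zero fun hn => hne (by rw [hn])
  have hm : 1 ≤ m := by
    by_contra hm
    obtain rfl : m = 0 := by omega
    exact hna (hρ.step 0 Nat.one_pos).1
  have hmem : ∀ i ≤ m + 1, ρ i ∈ {ρ 0, ρ (m + 1)} ∪ {z | G.ChainConnected x z} := by
    intro i hi
    obtain rfl | hi := hi.eq_or_lt
    exacts [by simp, (hρ.step i hi).2.1]
  have hcomp : ∀ i, 1 ≤ i → i ≤ m → G.ChainConnected x (ρ i) := by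
    intro i hi him
    obtain (h | h) | h := hmem i (by omega)
    · exact (hρ.ne 0 i hi (by omega) h.symm).elim
    · exact (hρ.ne i (m + 1) (by omega) le_rfl h).elim
    · exact h
  have hstep : ∀ i ≤ m, G.Adj (ρ i) (ρ (i + 1)) := fun i hi => (hρ.step i (by omega)).1
  have hchord : ∀ i j, i < j → j ≤ m + 1 → G.Adj (ρ i) (ρ j) → j = i + 1 := fun i j hij hj h =>
    hρ.eq_succ_of_rel i j hij hj ⟨h, hmem i (by omega), hmem j hj⟩
  refine ⟨m, ρ, hm, rfl, rfl, fun i j hi hj hij => ?_, ?_, ?_, fun i hi him => ?_,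
    fun i j hi hj hadj => ?_⟩
  · obtain hlt | hlt := hij.lt_or_gt
    exacts [hρ.ne i j hlt hj, (hρ.ne j i hlt hi).symm]
  · exact (hcomp 1 le_rfl hm).dir_of_adj hTx (hstep 0 (by omega))
  · exact (hxy.symm.trans (hcomp m hm le_rfl)).dir_of_adj hey (hstep m le_rfl).symm
  · exact ((hcomp i hi him.le).symm.trans (hcomp (i + 1) (by omega) him)).undir_of_adj
      (hstep i him.le)
  · obtain hlt | rfl | hlt := lt_trichotomy i j
    exacts [.inl (hchord i j hlt hj hadj), (not_adj_self _ hadj).elim,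
      .inr (hchord j i hlt hi hadj.symm)]

lemma mem_mb_of_adj (h : G.Adj T e) : e ∈ G.mb T := by
  obtain h | h | h := h
  exacts [.inl (.inr h), .inl (.inl (.inl h)), .inl (.inl (.inr (G.undir_symm _ _ h)))]

lemma mem_mb_of_common_component (hne : T ≠ e) (hTx : G.dir T x) (hxy : G.ChainConnected x y)
    (hey : G.dir e y) : e ∈ G.mb T := by
  by_cases hadj : G.Adj T e
  exacts [mem_mb_of_adj hadj, .inr (mem_csp_of_common_component hne hadj hTx hxy hey)]

end MarkovBlanket

namespace Route

variable {ω ω' : Route G} {Z : Set V} {i p a a' b b' : ℕ}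

lemma exists_isSection (ha : a ≤ ω.len) (hstart : 0 < a → ¬ G.undir (ω.vtx (a - 1)) (ω.vtx a)) :
    ∃ b, ω.IsSection a b := by
  classical
  have hex : ∃ b, a ≤ b ∧ (b < ω.len → ¬ G.undir (ω.vtx b) (ω.vtx (b + 1))) :=
    ⟨ω.len, ha, fun h => (lt_irrefl _ h).elim⟩
  obtain ⟨hab, hend⟩ := Nat.find_spec hex
  have hle : Nat.find hex ≤ ω.len := Nat.find_min' hex ⟨ha, fun h => (lt_irrefl _ h).elim⟩
  refine ⟨Nat.find hex, hab, hle, fun k hak hkb => ?_, hstart, hend⟩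
  by_contra hk
  exact Nat.find_min hex hkb ⟨hak, fun _ => hk⟩

lemma IsSection.chainConnected (h : ω.IsSection a b) :
    G.ChainConnected (ω.vtx a) (ω.vtx b) :=
  Relation.ReflTransGen.lift ω.vtx (fun _ _ => id) _ _ <|
    reflTransGen_of_succ_of_le (fun i j => G.undir (ω.vtx i) (ω.vtx j))
      (fun k hk => h.2.2.1 k hk.1 hk.2) h.1

/-- The route starts at position `p` or comes to it against an arrow, so that the section starting
at `p` is not a collider section. -/
def EntersByTail (ω : Route G) (p : ℕ) : Prop := 0 < p → G.dir (ω.vtx p) (ω.vtx (p - 1))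

lemma entersByTail_zero : ω.EntersByTail 0 := fun h => (lt_irrefl 0 h).elim

lemma entersByTail_succ (h : G.dir (ω.vtx (p + 1)) (ω.vtx p)) : ω.EntersByTail (p + 1) :=
  fun _ => h

lemma EntersByTail.exists_isSection (h : ω.EntersByTail p) (hp : p ≤ ω.len) :
    ∃ b, ω.IsSection p b :=
  Route.exists_isSection hp fun hpos hu => G.dir_not_undir _ _ (h hpos) (G.undir_symm _ _ hu)

lemma EntersByTail.not_isColliderSection (h : ω.EntersByTail p) : ¬ ω.IsColliderSection p b :=
  fun ⟨_, hpos, _, hdir, _⟩ => G.dir_asymm _ _ hdir (h hpos)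

lemma Active.notMem_of_entersByTail (hω : ω.Active Z) (h : ω.EntersByTail p) (hp : p ≤ ω.len) :
    ω.vtx p ∉ Z := by
  obtain ⟨b, hb⟩ := h.exists_isSection hp
  exact hω.2 p b hb h.not_isColliderSection p le_rfl hb.1

lemma Active.notMem_succ_of_entersByTail (hω : ω.Active Z) (h : ω.EntersByTail p)
    (hp : p < ω.len) (hu : G.undir (ω.vtx p) (ω.vtx (p + 1))) : ω.vtx (p + 1) ∉ Z := by
  obtain ⟨b, hb⟩ := h.exists_isSection hp.le
  have hpb : p ≠ b := by
    rintro rfl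
    exact hb.2.2.2.2 hp hu
  exact hω.2 p b hb h.not_isColliderSection (p + 1) p.le_succ (hb.1.lt_of_ne hpb)

lemma Active.exists_isColliderSection (hω : ω.Active Z) (hp : p < ω.len)
    (hd : G.dir (ω.vtx p) (ω.vtx (p + 1))) (hZ : ω.vtx (p + 1) ∈ Z) :
    ∃ b, ω.IsColliderSection (p + 1) b := by
  obtain ⟨b, hb⟩ := Route.exists_isSection hp fun _ => G.dir_not_undir _ _ hd
  by_contra! hcol
  exact hω.2 _ b hb (hcol b) _ le_rfl hb.1 hZ

lemma Active.exists_later_return {T : V} (hω : ω.Active (G.mb T)) (hi : i < ω.len)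
    (hiT : ω.vtx i = T) (htail : ω.EntersByTail i) :
    ∃ j, i < j ∧ j ≤ ω.len ∧ ω.vtx j = T ∧ ω.EntersByTail j := by
  subst hiT
  have hadj := ω.link i hi
  have hmem : ω.vtx (i + 1) ∈ G.mb (ω.vtx i) := mem_mb_of_adj hadj
  obtain hchild | hparent | hneighbour := hadj
  · obtain ⟨b, hsec, -, hb, -, hspouse⟩ := hω.exists_isColliderSection hi hchild hmem
    have hb_tail : ω.EntersByTail (b + 1) := entersByTail_succ hspouse
    refine ⟨b + 1, hsec.1.trans b.le_succ, hb, ?_, hb_tail⟩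
    by_contra hne
    exact hω.notMem_of_entersByTail hb_tail hb
      (mem_mb_of_common_component (Ne.symm hne) hchild hsec.chainConnected hspouse)
  · exact (hω.notMem_of_entersByTail (entersByTail_succ hparent) hi hmem).elim
  · exact (hω.notMem_succ_of_entersByTail htail hi hneighbour hmem).elim

lemma Active.vtx_len_eq {T : V} (hω : ω.Active (G.mb T)) (h0 : ω.vtx 0 = T) :
    ω.vtx ω.len = T := by
  suffices hreturn : ∀ i ≤ ω.len, ω.vtx i = T → ω.EntersByTail i → ω.vtx ω.len = T from
    hreturn 0 (Nat.zero_le _) h0 entersByTail_zero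
  intro i hi hiT htail
  induction hd : ω.len - i using Nat.strong_induction_on generalizing i with
  | _ d ih =>
    obtain rfl | hlt := hi.eq_or_lt
    · exact hiT
    · obtain ⟨j, hij, hj, hjT, hjtail⟩ := hω.exists_later_return hlt hiT htail
      exact ih (ω.len - j) (by omega) j hj hjT hjtail rfl

/-- `ω'` runs through the vertices of `ω` backwards. This is a symmetric relation between routes
and not an operation, because reversing twice need not restore the values of `vtx` beyond `len`. -/
structure IsReversal (ω ω' : Route G) : Prop where
  len_eq : ω'.len = ω.len
  vtx_eq : ∀ ⦃i j⦄, i + j = ω.len → ω'.vtx i = ω.vtx j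

lemma exists_isReversal (ω : Route G) : ∃ ω' : Route G, ω.IsReversal ω' := by
  refine ⟨⟨ω.len, fun i => ω.vtx (ω.len - i), fun i hi => ?_⟩, rfl, fun i j hij => ?_⟩
  · obtain ⟨j, hj⟩ := Nat.exists_eq_add_of_lt hi
    rw [show ω.len - i = j + 1 by omega, show ω.len - (i + 1) = j by omega]
    exact (ω.link j (by omega)).symm
  · exact congrArg ω.vtx (by omega)

namespace IsReversal

lemma symm (h : ω.IsReversal ω') : ω'.IsReversal ω where
  len_eq := h.len_eq.symm
  vtx_eq _ _ hij := (h.vtx_eq (by rw [add_comm, hij, h.len_eq])).symm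

lemma isSection (h : ω.IsReversal ω') (ha : a + a' = ω.len) (hb : b + b' = ω.len)
    (hs : ω.IsSection a b) : ω'.IsSection b' a' := by
  obtain ⟨hab, -, hundir, hleft, hright⟩ := hs
  have hlen := h.len_eq
  refine ⟨by omega, by omega, fun k hbk hka => ?_, fun hpos hu => ?_, fun hlt hu => ?_⟩
  · obtain ⟨j, hj⟩ : ∃ j, k + 1 + j = ω.len := ⟨ω.len - (k + 1), by omega⟩
    rw [h.vtx_eq hj, h.vtx_eq (show k + (j + 1) = ω.len by omega)]
    exact G.undir_symm _ _ (hundir j (by omega) (by omega))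
  · rw [h.vtx_eq (show b' - 1 + (b + 1) = ω.len by omega),
      h.vtx_eq (show b' + b = ω.len by omega)] at hu
    exact hright (by omega) (G.undir_symm _ _ hu)
  · rw [h.vtx_eq (show a' + a = ω.len by omega),
      h.vtx_eq (show a' + 1 + (a - 1) = ω.len by omega)] at hu
    exact hleft (by omega) (G.undir_symm _ _ hu)

lemma isColliderSection (h : ω.IsReversal ω') (ha : a + a' = ω.len) (hb : b + b' = ω.len)
    (hc : ω.IsColliderSection a b) : ω'.IsColliderSection b' a' := by
  obtain ⟨hs, hpos, hlt, hleft, hright⟩ := hc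
  have hlen := h.len_eq
  refine ⟨h.isSection ha hb hs, by omega, by omega, ?_, ?_⟩
  · rwa [h.vtx_eq (show b' - 1 + (b + 1) = ω.len by omega),
      h.vtx_eq (show b' + b = ω.len by omega)]
  · rwa [h.vtx_eq (show a' + 1 + (a - 1) = ω.len by omega),
      h.vtx_eq (show a' + a = ω.len by omega)]

lemma active (h : ω.IsReversal ω') (hω : ω.Active Z) : ω'.Active Z := by
  have hlen := h.len_eq
  refine ⟨fun a b hc => ?_, fun a b hs hc k hak hkb => ?_⟩
  · have hb : b ≤ ω.len := hlen ▸ hc.1.2.1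
    have hab : a ≤ b := hc.1.1
    obtain ⟨k, hbk, hka, hk⟩ := hω.1 (ω.len - b) (ω.len - a)
      (h.symm.isColliderSection (by omega) (by omega) hc)
    refine ⟨ω.len - k, by omega, by omega, ?_⟩
    rwa [h.vtx_eq (show ω.len - k + k = ω.len by omega)]
  · have hb : b ≤ ω.len := hlen ▸ hs.2.1
    have hab : a ≤ b := hs.1
    rw [h.vtx_eq (show k + (ω.len - k) = ω.len by omega)]
    exact hω.2 (ω.len - b) (ω.len - a) (h.symm.isSection (by omega) (by omega) hs)
      (fun hc' => hc (h.isColliderSection (by omega) (by omega) hc')) _ (by omega) (by omega)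

end IsReversal

end Route

lemma cSep_of_forall_intercepted {X Y Z : Set V}
    (h : ∀ ω : Route G, ω.vtx 0 ∈ X → ω.vtx ω.len ∈ Y → ω.Intercepted Z) : G.CSep X Y Z := by
  rintro ω (⟨h0, hlast⟩ | ⟨h0, hlast⟩)
  · exact h ω h0 hlast
  · obtain ⟨ω', hω'⟩ := ω.exists_isReversal
    have h0' : ω'.vtx 0 = ω.vtx ω.len := hω'.vtx_eq (zero_add _)
    have hlast' : ω'.vtx ω'.len = ω.vtx 0 := hω'.vtx_eq hω'.len_eq
    exact fun hact => h ω' (h0' ▸ hlast) (hlast' ▸ h0) (hω'.active hact)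

lemma CSep.mono_right {X Y Y' Z : Set V} (h : G.CSep X Y Z) (hY : Y' ⊆ Y) : G.CSep X Y' Z :=
  fun ω hends => h ω (hends.imp (.imp_right (@hY _)) (.imp_left (@hY _)))

end ChainGraph

theorem markovBlanket_cSep_general {V : Type*} (G : ChainGraph V) (T : V) :
    G.CSep {T} {T}ᶜ (G.mb T) :=
  ChainGraph.cSep_of_forall_intercepted fun _ h0 hlast hact => hlast (hact.vtx_len_eq h0)

/-- In an LWF chain graph `G`, the target `T` is c-separated
from `V ∖ ({T} ∪ Mb(T))` given `Mb(T)`; that is, every route in `G` between `T`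
and any vertex `A ∈ V ∖ ({T} ∪ Mb(T))` is intercepted by `Mb(T)`. -/
theorem markovBlanket_cSep {V : Type*} [Fintype V] (G : ChainGraph V) (T : V) :
    G.CSep {T} (Set.univ \ ({T} ∪ G.mb T)) (G.mb T) :=
  (markovBlanket_cSep_general G T).mono_right fun _ hA hT => hA.2 (.inl hT)

end LWF
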